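/- Fix a conditional pmf r on 𝒳̂ⁿ given 𝒳ⁿ. For any pmfs p₀, p₁, …, p_{k−1} on 𝒳ⁿ and p = (1/k)·Σ_{i=0}^{k−1} pᵢ, the directed information is superadditive with respect to this mixture: I_p(X̂ⁿ→Xⁿ) ≥ (1/k)·Σ_{i=0}^{k−1} I_{pᵢ}(X̂ⁿ→Xⁿ), where for a source pmf w on 𝒳ⁿ, I_w(X̂ⁿ→Xⁿ) denotes the directed information computed from w, r and the causal conditioning pmf induced by the joint w·r. -/

import Mathlib

open scoped BigOperators
open Filter

noncomputable section

namespace FFRD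

variable {X Y : Type} [Fintype X] [DecidableEq X] [Fintype Y] [DecidableEq Y] {n : ℕ}

/-- `p` is a probability mass function on a finite type. -/
def IsPMF {α : Type} [Fintype α] (p : α → ℝ) : Prop :=
  (∀ a, 0 ≤ p a) ∧ ∑ a, p a = 1

/-- `r` is a conditional pmf on `Fin n → Y` given `Fin n → X`. -/
def IsCondPMF (r : (Fin n → X) → (Fin n → Y) → ℝ) : Prop :=
  (∀ x y, 0 ≤ r x y) ∧ ∀ x, ∑ y, r x y = 1

/-- The causal conditioning pmf `q_r(ŷⁿ‖x^{n-1})` induced by the joint pmf `p(x)·r(y|x)`: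
the product over `i` of the conditional probabilities `P(y_i | y^{i-1}, x^{i-1})`. -/
def causalCond (p : (Fin n → X) → ℝ) (r : (Fin n → X) → (Fin n → Y) → ℝ)
    (x : Fin n → X) (y : Fin n → Y) : ℝ :=
  ∏ i : Fin n,
    ((∑ x' : Fin n → X, ∑ y' : Fin n → Y,
        if (∀ j, j < i → x' j = x j) ∧ (∀ j, j ≤ i → y' j = y j)
        then p x' * r x' y' else 0) /
      (∑ x' : Fin n → X, ∑ y' : Fin n → Y,
        if (∀ j, j < i → x' j = x j) ∧ (∀ j, j < i → y' j = y j)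
        then p x' * r x' y' else 0))

/-- Directed information `I(X̂ⁿ → Xⁿ)` computed from source pmf `p` and conditional pmf `r`. -/
def directedInfo (p : (Fin n → X) → ℝ) (r : (Fin n → X) → (Fin n → Y) → ℝ) : ℝ :=
  ∑ x, ∑ y, p x * r x y * Real.logb 2 (r x y / causalCond p r x y)

/-- The `n`-th order rate distortion function with feed-forward. -/
def Rn (n : ℕ) (p : (Fin n → X) → ℝ) (d : (Fin n → X) → (Fin n → Y) → ℝ) (D : ℝ) : ℝ :=
  (1 / (n : ℝ)) *
    sInf {v | ∃ r : (Fin n → X) → (Fin n → Y) → ℝ, IsCondPMF r ∧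
      (∑ x, ∑ y, p x * r x y * d x y) ≤ D ∧ v = directedInfo p r}

/-- Left shift on sequences. -/
def shift (X : Type) : (ℕ → X) → (ℕ → X) := fun ω k => ω (k + 1)

/-- The law of the first `n` coordinates under `μ`. -/
def lawFin [MeasurableSpace X] (μ : MeasureTheory.Measure (ℕ → X)) (n : ℕ)
    (x : Fin n → X) : ℝ :=
  (μ {ω | ∀ i : Fin n, ω (i : ℕ) = x i}).toReal

/-- Per-letter distortion extended to blocks of length `L`. -/
def dBlock (d0 : X → Y → ℝ) (L : ℕ) (x : Fin L → X) (y : Fin L → Y) : ℝ :=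
  (1 / (L : ℝ)) * ∑ i, d0 (x i) (y i)

end FFRD

namespace FFRDaux

def S {Ω : Type} [Fintype Ω] (R : Ω → Ω → Prop) [DecidableRel R] (J : Ω → ℝ) (w : Ω) : ℝ :=
  ∑ w', if R w' w then J w' else 0

section
variable {Ω : Type} [Fintype Ω]

lemma S_nonneg (R : Ω → Ω → Prop) [DecidableRel R] (J : Ω → ℝ) (hJ : ∀ w, 0 ≤ J w) (w : Ω) :
    0 ≤ S R J w := by
  unfold S
  refine Finset.sum_nonneg fun w' _ => ?_
  split_ifs
  · exact hJ w'
  · exact le_rfl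

lemma S_pos (R : Ω → Ω → Prop) [DecidableRel R] (hR : Equivalence R) (J : Ω → ℝ)
    (hJ : ∀ w, 0 ≤ J w) (w : Ω) (hw : 0 < J w) : 0 < S R J w := by
  unfold S
  refine Finset.sum_pos' (fun w' _ => ?_) ⟨w, Finset.mem_univ _, ?_⟩
  · split_ifs
    · exact hJ w'
    · exact le_rfl
  · rw [if_pos (hR.refl w)]
    exact hw

lemma S_congr (R : Ω → Ω → Prop) [DecidableRel R] (hR : Equivalence R) (J : Ω → ℝ)
    {w v : Ω} (h : R w v) : S R J w = S R J v := by
  unfold S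
  refine Finset.sum_congr rfl fun u _ => ?_
  have : R u w ↔ R u v := ⟨fun a => hR.trans a h, fun a => hR.trans a (hR.symm h)⟩
  simp only [this]

lemma key (R : Ω → Ω → Prop) [DecidableRel R] (hR : Equivalence R) (J K φ : Ω → ℝ)
    (hJ : ∀ w, 0 ≤ J w) (hK : ∀ w, 0 ≤ K w) (hφ : ∀ w, 0 ≤ φ w)
    (hinv : ∀ w v, R w v → φ w = φ v) :
    ∑ w, J w * (φ w * S R K w / S R J w) ≤ ∑ w, K w * φ w := by
  have h1 : ∀ w, J w * (φ w * S R K w / S R J w)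
      = ∑ v, if R v w then K v * (φ v * (J w / S R J v)) else 0 := by
    intro w
    have : J w * (φ w * S R K w / S R J w) = (J w * φ w / S R J w) * S R K w := by ring
    rw [this]
    conv_lhs => rw [S.eq_def R K w]
    rw [Finset.mul_sum]
    refine Finset.sum_congr rfl fun v _ => ?_
    split_ifs with h
    · rw [hinv v w h, S_congr R hR J h]; ring
    · simp
  simp only [h1]
  rw [Finset.sum_comm]
  refine Finset.sum_le_sum fun v _ => ?_
  have h2 : (∑ w, if R v w then K v * (φ v * (J w / S R J v)) else 0)
      = K v * φ v * (S R J v / S R J v) := by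
    conv_rhs => rw [S.eq_def R J v, Finset.sum_div, Finset.mul_sum]
    refine Finset.sum_congr rfl fun w _ => ?_
    have : R v w ↔ R w v := ⟨fun a => hR.symm a, fun a => hR.symm a⟩
    simp only [this]
    split_ifs
    · rw [S.eq_def R J v]; ring
    · simp
  rw [h2]
  exact mul_le_of_le_one_right (mul_nonneg (hK v) (hφ v)) (div_self_le_one _)

lemma gibbs (F G : Ω → Ω → Prop) [DecidableRel F] [DecidableRel G] (hF : Equivalence F)
    (hG : Equivalence G) (hFG : ∀ w v, F w v → G w v) (J K : Ω → ℝ)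
    (hJ : ∀ w, 0 ≤ J w) (hK : ∀ w, 0 ≤ K w) (hJK : ∀ w, 0 < J w → 0 < K w) :
    ∑ w, J w * Real.log (S F K w / S G K w) ≤ ∑ w, J w * Real.log (S F J w / S G J w) := by
  have h1 := key F hF J K (fun w => S G J w / S G K w) hJ hK
    (fun w => div_nonneg (S_nonneg G J hJ w) (S_nonneg G K hK w))
    (fun w v h => by
      show S G J w / S G K w = S G J v / S G K v
      rw [S_congr G hG J (hFG w v h), S_congr G hG K (hFG w v h)])
  have h2 := key G hG K J (fun _ => 1) hK hJ (fun _ => zero_le_one) (fun _ _ _ => rfl)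
  simp only [one_mul, mul_one] at h2
  have h3 := h1.trans h2
  have h4 : ∑ w, (J w * Real.log (S F K w / S G K w) - J w * Real.log (S F J w / S G J w))
      ≤ ∑ w, (J w * (S G J w / S G K w * S F K w / S F J w) - J w) := by
    refine Finset.sum_le_sum fun w _ => ?_
    rcases (hJ w).eq_or_lt with h | h
    · simp [← h]
    · have a1 := S_pos F hF J hJ w h
      have a2 := S_pos G hG J hJ w h
      have a3 := S_pos F hF K hK w (hJK w h)
      have a4 := S_pos G hG K hK w (hJK w h)
      have e : Real.log (S F K w / S G K w) - Real.log (S F J w / S G J w)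
          = Real.log (S G J w / S G K w * S F K w / S F J w) := by
        rw [← Real.log_div (by positivity) (by positivity)]
        congr 1
        field_simp
      have := Real.log_le_sub_one_of_pos
        (show 0 < S G J w / S G K w * S F K w / S F J w by positivity)
      rw [← mul_sub, e]
      nlinarith
  rw [Finset.sum_sub_distrib, Finset.sum_sub_distrib] at h4
  linarith

end

section
variable {X Y : Type} [Fintype X] [DecidableEq X] [Fintype Y] [DecidableEq Y] {n : ℕ}

def Fr (i : Fin n) (w v : (Fin n → X) × (Fin n → Y)) : Prop :=
  (∀ j, j < i → w.1 j = v.1 j) ∧ (∀ j, j ≤ i → w.2 j = v.2 j)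

def Gr (i : Fin n) (w v : (Fin n → X) × (Fin n → Y)) : Prop :=
  (∀ j, j < i → w.1 j = v.1 j) ∧ (∀ j, j < i → w.2 j = v.2 j)

instance (i : Fin n) : DecidableRel (Fr (X := X) (Y := Y) i) := fun w v => by
  unfold Fr; infer_instance

instance (i : Fin n) : DecidableRel (Gr (X := X) (Y := Y) i) := fun w v => by
  unfold Gr; infer_instance

lemma Fr_eq (i : Fin n) : Equivalence (Fr (X := X) (Y := Y) i) :=
  ⟨fun _ => ⟨fun _ _ => rfl, fun _ _ => rfl⟩,
   fun h => ⟨fun j hj => (h.1 j hj).symm, fun j hj => (h.2 j hj).symm⟩,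
   fun h g => ⟨fun j hj => (h.1 j hj).trans (g.1 j hj), fun j hj => (h.2 j hj).trans (g.2 j hj)⟩⟩

lemma Gr_eq (i : Fin n) : Equivalence (Gr (X := X) (Y := Y) i) :=
  ⟨fun _ => ⟨fun _ _ => rfl, fun _ _ => rfl⟩,
   fun h => ⟨fun j hj => (h.1 j hj).symm, fun j hj => (h.2 j hj).symm⟩,
   fun h g => ⟨fun j hj => (h.1 j hj).trans (g.1 j hj), fun j hj => (h.2 j hj).trans (g.2 j hj)⟩⟩

def Jt (p : (Fin n → X) → ℝ) (r : (Fin n → X) → (Fin n → Y) → ℝ)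
    (w : (Fin n → X) × (Fin n → Y)) : ℝ := p w.1 * r w.1 w.2

lemma causal_eq (p : (Fin n → X) → ℝ) (r : (Fin n → X) → (Fin n → Y) → ℝ)
    (w : (Fin n → X) × (Fin n → Y)) :
    FFRD.causalCond p r w.1 w.2 = ∏ i, S (Fr i) (Jt p r) w / S (Gr i) (Jt p r) w := by
  unfold FFRD.causalCond S
  refine Finset.prod_congr rfl fun i _ => ?_
  rw [Fintype.sum_prod_type, Fintype.sum_prod_type]
  congr!

lemma log_term (p : (Fin n → X) → ℝ) (r : (Fin n → X) → (Fin n → Y) → ℝ)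
    (hK : ∀ w, 0 ≤ Jt p r w) (w : (Fin n → X) × (Fin n → Y)) (hw : 0 < Jt p r w) :
    Real.logb 2 (r w.1 w.2 / FFRD.causalCond p r w.1 w.2) =
      (Real.log (r w.1 w.2) -
        ∑ i, Real.log (S (Fr i) (Jt p r) w / S (Gr i) (Jt p r) w)) / Real.log 2 := by
  have hne : ∀ i ∈ (Finset.univ : Finset (Fin n)),
      S (Fr i) (Jt p r) w / S (Gr i) (Jt p r) w ≠ 0 := fun i _ =>
    (div_pos (S_pos _ (Fr_eq i) _ hK w hw) (S_pos _ (Gr_eq i) _ hK w hw)).ne'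
  have hr : r w.1 w.2 ≠ 0 := by
    intro h
    simp [Jt, h] at hw
  rw [Real.logb, causal_eq, Real.log_div hr (Finset.prod_ne_zero_iff.2 hne), Real.log_prod hne]

lemma compare (p p' : (Fin n → X) → ℝ) (r : (Fin n → X) → (Fin n → Y) → ℝ)
    (hJ : ∀ w, 0 ≤ Jt p' r w) (hK : ∀ w, 0 ≤ Jt p r w)
    (hJK : ∀ w, 0 < Jt p' r w → 0 < Jt p r w) :
    FFRD.directedInfo p' r ≤
      ∑ x, ∑ y, p' x * r x y * Real.logb 2 (r x y / FFRD.causalCond p r x y) := by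
  unfold FFRD.directedInfo
  rw [← Fintype.sum_prod_type' (f := fun x y =>
      p' x * r x y * Real.logb 2 (r x y / FFRD.causalCond p' r x y)),
    ← Fintype.sum_prod_type' (f := fun x y =>
      p' x * r x y * Real.logb 2 (r x y / FFRD.causalCond p r x y))]
  have e : ∀ q : (Fin n → X) → ℝ, (∀ w, 0 ≤ Jt q r w) → (∀ w, 0 < Jt p' r w → 0 < Jt q r w) →
      ∑ w : (Fin n → X) × (Fin n → Y), p' w.1 * r w.1 w.2 *
        Real.logb 2 (r w.1 w.2 / FFRD.causalCond q r w.1 w.2)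
      = (∑ w, Jt p' r w * Real.log (r w.1 w.2) -
        ∑ i, ∑ w, Jt p' r w * Real.log (S (Fr i) (Jt q r) w / S (Gr i) (Jt q r) w))
          / Real.log 2 := by
    intro q hq hq'
    rw [Finset.sum_comm, ← Finset.sum_sub_distrib, Finset.sum_div]
    refine Finset.sum_congr rfl fun w _ => ?_
    rw [← Finset.mul_sum, ← mul_sub]
    change Jt p' r w * _ = _
    rcases (hJ w).eq_or_lt with h | h
    · simp [← h]
    · rw [log_term q r hq w (hq' w h)]; ring
  rw [e p' hJ (fun _ h => h), e p hK hJK]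
  refine div_le_div_of_nonneg_right ?_ (Real.log_nonneg one_le_two)
  refine sub_le_sub_left (Finset.sum_le_sum fun i _ => ?_) _
  exact gibbs (Fr i) (Gr i) (Fr_eq i) (Gr_eq i)
    (fun w v h => ⟨h.1, fun j hj => h.2 j hj.le⟩) _ _ hJ hK hJK

end

end FFRDaux

open FFRD in
/-- for a fixed conditional pmf `r`, the directed information is convex in
the source pmf: for any pmfs `p₀,…,p_{k−1}` and their uniform mixture `p`,
`I_p(X̂ⁿ→Xⁿ) ≥ (1/k)·Σᵢ I_{pᵢ}(X̂ⁿ→Xⁿ)`. -/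
theorem directedInfo_superadditive_mixture
    {X Y : Type} [Fintype X] [DecidableEq X] [Fintype Y] [DecidableEq Y]
    (n : ℕ) (k : ℕ) (hk : 1 ≤ k)
    (r : (Fin n → X) → (Fin n → Y) → ℝ) (hr : IsCondPMF r)
    (pv : Fin k → (Fin n → X) → ℝ) (hpv : ∀ i, IsPMF (pv i))
    (p : (Fin n → X) → ℝ)
    (hp : ∀ x, p x = (1 / (k : ℝ)) * ∑ i : Fin k, pv i x) :
    directedInfo p r ≥ (1 / (k : ℝ)) * ∑ i : Fin k, directedInfo (pv i) r := by
  have hkp : (0 : ℝ) < 1 / (k : ℝ) := by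
    have : (0 : ℝ) < k := by exact_mod_cast hk
    positivity
  have hp0 : ∀ x, 0 ≤ p x := fun x => by
    rw [hp]
    exact mul_nonneg hkp.le (Finset.sum_nonneg fun i _ => (hpv i).1 x)
  have hmain : ∀ i, directedInfo (pv i) r ≤
      ∑ x, ∑ y, pv i x * r x y * Real.logb 2 (r x y / causalCond p r x y) := by
    intro i
    refine FFRDaux.compare p (pv i) r (fun w => mul_nonneg ((hpv i).1 _) (hr.1 _ _))
      (fun w => mul_nonneg (hp0 _) (hr.1 _ _)) (fun w hw => ?_)
    have hr0 : 0 < r w.1 w.2 := by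
      refine lt_of_le_of_ne (hr.1 _ _) fun h => ?_
      simp [FFRDaux.Jt, ← h] at hw
    have hpi : 0 < pv i w.1 := by
      refine lt_of_le_of_ne ((hpv i).1 _) fun h => ?_
      simp [FFRDaux.Jt, ← h] at hw
    refine mul_pos ?_ hr0
    rw [hp]
    exact mul_pos hkp (Finset.sum_pos' (fun j _ => (hpv j).1 _) ⟨i, Finset.mem_univ _, hpi⟩)
  have hsum : directedInfo p r = (1 / (k : ℝ)) * ∑ i : Fin k,
      ∑ x, ∑ y, pv i x * r x y * Real.logb 2 (r x y / causalCond p r x y) := by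
    symm
    rw [directedInfo, Finset.sum_comm, Finset.mul_sum]
    refine Finset.sum_congr rfl fun x _ => ?_
    rw [Finset.sum_comm, Finset.mul_sum]
    refine Finset.sum_congr rfl fun y _ => ?_
    rw [← Finset.sum_mul, ← Finset.sum_mul, hp x]
    ring
  rw [hsum, ge_iff_le]
  exact mul_le_mul_of_nonneg_left (Finset.sum_le_sum fun i _ => hmain i) hkp.le
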